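/- Let n be a real number and f(t) = t^2 * (1 + ln(n/t)). For reals x, y with 1 ≤ x ≤ y and y + 1 ≤ n/2, the partial derivative bound holds: (2y+2)*ln(n/(y+1)) - 2y*ln(n/y) + 1 ≥ 0. -/

import Mathlib

/-!
For `f t = t ^ 2 * (1 + log (n / t))` the expression in question is `f' (y + 1) - f' y`, where
`f' t = t * (1 + 2 * log (n / t)) = 2 * t * log (√e * n / t)`. This is increasing on
`0 < t ≤ n / √e`, because `t * log (c / t)` is increasing up to its maximum at `t = c / e`. Since
`√e ≤ 2`, that range contains `y` and `y + 1`.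
-/

open Real Set

lemma mul_log_div_eq_neg_mul {c : ℝ} (hc : c ≠ 0) (t : ℝ) :
    t * log (c / t) = -c * (t / c * log (t / c)) := by
  rw [← inv_div t c, log_inv]
  field_simp

lemma strictMonoOn_mul_log_div (c : ℝ) :
    StrictMonoOn (fun t ↦ t * log (c / t)) (Icc 0 (c / exp 1)) := by
  intro s hs t ht hst
  have hc : 0 < c := (div_pos_iff_of_pos_right (exp_pos 1)).1 ((hs.1.trans_lt hst).trans_le ht.2)
  have div_mem {u : ℝ} (hu : u ∈ Icc 0 (c / exp 1)) : u / c ∈ Icc 0 (exp (-1)) := by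
    refine ⟨div_nonneg hu.1 hc.le, (div_le_iff₀' hc).2 ?_⟩
    rw [exp_neg, ← div_eq_mul_inv]
    exact hu.2
  have anti : t / c * log (t / c) < s / c * log (s / c) :=
    mul_log_strictAntiOn (div_mem hs) (div_mem ht) (div_lt_div_of_pos_right hst hc)
  simp only [mul_log_div_eq_neg_mul hc.ne']
  exact mul_lt_mul_of_neg_left anti (neg_lt_zero.2 hc)

lemma log_exp_mul_div (a : ℝ) {n t : ℝ} (hn : n ≠ 0) (ht : t ≠ 0) :
    log (exp a * n / t) = a + log (n / t) := by
  rw [mul_div_assoc, log_mul (exp_ne_zero a) (div_ne_zero hn ht), log_exp]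

lemma exp_half_le_two : exp (1 / 2) ≤ 2 :=
  (le_log_iff_exp_le two_pos).1 (by linarith [log_two_gt_d9])

lemma strictMonoOn_mul_one_add_two_mul_log_div (n : ℝ) :
    StrictMonoOn (fun t ↦ t * (1 + 2 * log (n / t))) (Ioc 0 (n / exp (1 / 2))) := by
  have endpoint : exp (1 / 2) * n / exp 1 = n / exp (1 / 2) := by
    rw [← add_halves (1 : ℝ), exp_add, add_halves, mul_div_mul_left _ _ (exp_ne_zero _)]
  have mono : StrictMonoOn (fun t ↦ 2 * (t * log (exp (1 / 2) * n / t)))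
      (Ioc 0 (n / exp (1 / 2))) := by
    rw [← endpoint]
    exact (strictMono_mul_left_of_pos two_pos).comp_strictMonoOn
      ((strictMonoOn_mul_log_div _).mono Ioc_subset_Icc_self)
  refine mono.congr fun t ht ↦ ?_
  have hn : n ≠ 0 := (div_ne_zero_iff.1 (ht.1.trans_le ht.2).ne').1
  simp only [log_exp_mul_div _ hn ht.1.ne']
  ring

theorem f_diff_deriv_nonneg_general {n y : ℝ} (hy : 0 < y) (hyn : y + 1 ≤ n / exp (1 / 2)) :
    0 < (2 * y + 2) * log (n / (y + 1)) - 2 * y * log (n / y) + 1 := by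
  have hlt : y < y + 1 := lt_add_one y
  have deriv_lt : y * (1 + 2 * log (n / y)) < (y + 1) * (1 + 2 * log (n / (y + 1))) :=
    strictMonoOn_mul_one_add_two_mul_log_div n ⟨hy, hlt.le.trans hyn⟩ ⟨hy.trans hlt, hyn⟩ hlt
  linarith

/-- The derivative in `y` of `f(y+1) - f(y)` is nonnegative for `1 ≤ y` and `y + 1 ≤ n/2`. -/
theorem f_diff_deriv_nonneg (n y : ℝ) (hy : 1 ≤ y) (hyn : y + 1 ≤ n / 2) :
    0 ≤ (2 * y + 2) * Real.log (n / (y + 1)) - 2 * y * Real.log (n / y) + 1 := by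
  have hn : 0 ≤ n := by linarith
  exact (f_diff_deriv_nonneg_general (by linarith) (hyn.trans (by grw [exp_half_le_two]))).le
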